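/- arXiv:1703.01581 — 2 statements merged into one kernel-verified Lean document; each statement's English description precedes it below -/
import Mathlib

section
/- There exists a finite partition 𝔻 \ {0} = A₁ ∪ A₂ ∪ … ∪ A_r of the nonzero dyadic rationals such that there do not exist i ∈ {1, 2, …, r} and a sequence ⟨xₙ⟩ₙ₌₁^∞ in 𝔻 \ {0} with FS(⟨xₙ⟩ₙ₌₁^∞) ∪ FP(⟨xₙ⟩ₙ₌₁^∞) ⊆ A_i. -/
/-- The dyadic rationals: rationals of the form `a / 2^n` with `a ∈ ℤ`, `n ∈ ℕ`. -/
def DyadicRationals : Set ℚ := {q | ∃ (a : ℤ) (n : ℕ), q = (a : ℚ) / 2 ^ n}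

/-- Finite sums of distinct terms of a sequence of rationals. -/
def FS (x : ℕ → ℚ) : Set ℚ :=
  {s | ∃ H : Finset ℕ, H.Nonempty ∧ s = ∑ t ∈ H, x t}

/-- Finite products of distinct terms of a sequence of rationals. -/
def FP (x : ℕ → ℚ) : Set ℚ :=
  {s | ∃ H : Finset ℕ, H.Nonempty ∧ s = ∏ t ∈ H, x t}

/-!
Write a nonzero dyadic rational as `q = 2 ^ v * u` with `u` odd. Colour `q` by the parity of `v`,
the class of `u` modulo `4` and the parity of the valuation of `u - 1`. On a sequence whose terms,
pairwise sums and pairwise products share one colour, `v` is then injective (two terms with equal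
`v` would have a sum of valuation `v + 1`), `u ≡ 1 [MOD 4]`, and likewise the valuation of `u - 1`
is injective. The same parity trick, applied to the binary order of magnitude of the signed distance
to the nearest integer, makes that distance tend to `0` along any real sequence whose pairwise sums
are suitably coloured.

If the terms are integers, then `v → ∞`. Applied to `log₂ |xₙ|`, the trick shows that the `xₙ` are
relatively ever closer to powers of two. Fix one term and let the other tend to infinity: the sum
keeps the valuation of the fixed term but comes close to a power of two, while the product gets a
large valuation and is no closer to a power of two than the fixed term. One more bit of colour,
comparing these two quantities, tells sum and product apart. If the terms are not integers, then
`v → -∞`, and the same comparison works with the distance of `x` to the nearest integer in place of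
that of `log₂ |x|` and the valuation of `u - 1` in place of `v`, with sum and product interchanged.
The nearest integers need the `2`-adic colour too: unless they all vanish, their valuations are then
injective, hence tend to `∞`; so the product of the fixed term with the integer nearest to the other
term is an integer.
-/

open Filter Function Topology

section Limits

lemma tendsto_cofinite_atTop_of_injective {ι α : Type*} [LinearOrder α] [LocallyFiniteOrder α]
    {f : ι → α} {C : α} (hf : Injective f) (hC : ∀ i, C ≤ f i) : Tendsto f cofinite atTop := by
  refine tendsto_atTop.2 fun b ↦ ?_
  refine ((Set.finite_Ico C b).preimage hf.injOn).subset fun i hi ↦ ?_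
  exact ⟨hC i, not_le.1 hi⟩

lemma tendsto_zpow_atTop_of_one_lt {α : Type*} [Field α] [LinearOrder α] [IsStrictOrderedRing α]
    [Archimedean α] {a : α} (ha : 1 < a) : Tendsto (fun k : ℤ ↦ a ^ k) atTop atTop := by
  refine tendsto_atTop_atTop.2 fun b ↦ ?_
  obtain ⟨n, hn⟩ := pow_unbounded_of_one_lt b ha
  refine ⟨n, fun k hk ↦ hn.le.trans ?_⟩
  simpa using zpow_le_zpow_right₀ ha.le hk

lemma not_eventually_lt_iff_lt {ι α : Type*} {l : Filter ι} [l.NeBot] [LinearOrder α]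
    [TopologicalSpace α] [OrderTopology α] [NoMaxOrder α] {f g : ι → α} {a b : α} (hab : a < b)
    (hf : Tendsto f l (𝓝 a)) (hg : Tendsto g l atTop) : ¬ ∀ᶠ i in l, (f i < b ↔ g i < b) := by
  intro h
  obtain ⟨i, hi, hfi, hgi⟩ :=
    (h.and ((hf.eventually_lt_const hab).and (hg.eventually_ge_atTop b))).exists
  exact hgi.not_gt (hi.1 hfi)

end Limits

section SignedFrac

section Ring

variable {α : Type*} [Ring α] [LinearOrder α] [FloorRing α]

/-- The signed distance from the nearest integer to `z`, a representative of `z` modulo `1` in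
`[-1/2, 1/2)`. -/
def signedFrac (z : α) : α := z - round z

variable [IsStrictOrderedRing α]

lemma signedFrac_intCast (n : ℤ) : signedFrac (n : α) = 0 := by
  simp [signedFrac]

lemma abs_signedFrac_add_le (y t : α) : |signedFrac (y + t)| ≤ |signedFrac y| + |t| :=
  calc |signedFrac (y + t)| ≤ |y + t - round y| := round_le _ _
    _ = |signedFrac y + t| := by rw [signedFrac, sub_add_eq_add_sub]
    _ ≤ |signedFrac y| + |t| := abs_add_le _ _

end Ring

lemma log_two_add_of_log_eq {R : Type*} [Semifield R] [LinearOrder R] [IsStrictOrderedRing R]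
    [FloorSemiring R] {a b : R} (ha : 0 < a) (hb : 0 < b) (h : Int.log 2 a = Int.log 2 b) :
    Int.log 2 (a + b) = Int.log 2 a + 1 := by
  have hab : 0 < a + b := add_pos ha hb
  have two_mul_zpow (k : ℤ) : ((2 : ℕ) : R) ^ (k + 1) = (2 : ℕ) ^ k + (2 : ℕ) ^ k := by
    rw [zpow_add_one₀ (by simp), Nat.cast_two, mul_two]
  apply le_antisymm
  · rw [← Int.lt_add_one_iff, ← Int.lt_zpow_iff_log_lt one_lt_two hab, two_mul_zpow]
    exact add_lt_add (Int.lt_zpow_succ_log_self one_lt_two a)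
      (h ▸ Int.lt_zpow_succ_log_self one_lt_two b)
  · rw [← Int.zpow_le_iff_le_log one_lt_two hab, two_mul_zpow]
    exact add_le_add (Int.zpow_log_le_self one_lt_two ha)
      (h ▸ Int.zpow_log_le_self one_lt_two hb)

section Field

variable {α : Type*} [Field α] [LinearOrder α] [FloorRing α]

/-- The colour of `z` that controls sums modulo `1`: on which side of the nearest integer `z` lies,
and the parity of the binary order of magnitude of its distance to that integer. -/
def fracColour (z : α) : SignType × Prop :=
  (SignType.sign (signedFrac z), Even (Int.log 2 |signedFrac z|))

lemma signedFrac_eq_zero_iff_of_fracColour_eq {y z : α} (h : fracColour y = fracColour z) :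
    signedFrac y = 0 ↔ signedFrac z = 0 := by
  have hsign : SignType.sign (signedFrac y) = SignType.sign (signedFrac z) := congrArg Prod.fst h
  rw [← sign_eq_zero_iff, hsign, sign_eq_zero_iff]

variable [IsStrictOrderedRing α]

lemma abs_signedFrac_le_half (z : α) : |signedFrac z| ≤ 1 / 2 :=
  abs_sub_round z

lemma round_add_of_sign_eq {y z : α}
    (hz : SignType.sign (signedFrac z) = SignType.sign (signedFrac y))
    (hyz : SignType.sign (signedFrac (y + z)) = SignType.sign (signedFrac y)) :
    round (y + z) = round y + round z := by
  have hy' := abs_le.1 (abs_signedFrac_le_half y)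
  have hz' := abs_le.1 (abs_signedFrac_le_half z)
  have hyz' := abs_le.1 (abs_signedFrac_le_half (y + z))
  have carry : ((round y + round z - round (y + z) : ℤ) : α) =
      signedFrac (y + z) - signedFrac y - signedFrac z := by
    simp only [signedFrac]; push_cast; ring
  have carry_lt : |((round y + round z - round (y + z) : ℤ) : α)| < 1 := by
    rw [carry, abs_lt]
    rcases lt_trichotomy (signedFrac y) 0 with h | h | h
    · rw [sign_neg h, sign_eq_neg_one_iff] at hz hyz
      constructor <;> linarith
    · rw [h, sign_zero, sign_eq_zero_iff] at hz hyz
      simp [h, hz, hyz]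
    · rw [sign_pos h, sign_eq_one_iff] at hz hyz
      constructor <;> linarith
  have := Int.abs_lt_one_iff.1 (by exact_mod_cast carry_lt)
  omega

lemma abs_signedFrac_add_of_sign_eq {y z : α}
    (hz : SignType.sign (signedFrac z) = SignType.sign (signedFrac y))
    (hyz : SignType.sign (signedFrac (y + z)) = SignType.sign (signedFrac y)) :
    |signedFrac (y + z)| = |signedFrac y| + |signedFrac z| := by
  have hadd : signedFrac (y + z) = signedFrac y + signedFrac z := by
    simp only [signedFrac, round_add_of_sign_eq hz hyz]; push_cast; ring
  rw [hadd, abs_add_eq_add_abs_iff]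
  rcases le_total 0 (signedFrac y) with h | h
  · exact .inl ⟨h, by rwa [← sign_nonneg_iff, hz, sign_nonneg_iff]⟩
  · exact .inr ⟨h, by rwa [← sign_nonpos_iff, hz, sign_nonpos_iff]⟩

lemma round_add_of_fracColour_eq {y z : α} (hz : fracColour z = fracColour y)
    (hyz : fracColour (y + z) = fracColour y) : round (y + z) = round y + round z :=
  round_add_of_sign_eq (congrArg Prod.fst hz) (congrArg Prod.fst hyz)

lemma abs_signedFrac_add_of_fracColour_eq {y z : α} (hz : fracColour z = fracColour y)
    (hyz : fracColour (y + z) = fracColour y) :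
    |signedFrac (y + z)| = |signedFrac y| + |signedFrac z| :=
  abs_signedFrac_add_of_sign_eq (congrArg Prod.fst hz) (congrArg Prod.fst hyz)

lemma tendsto_signedFrac_of_fracColour_eq [TopologicalSpace α] [OrderTopology α] {ι : Type*}
    {z : ι → α} (h₀ : ∀ i, signedFrac (z i) ≠ 0)
    (h₁ : ∀ i j, fracColour (z i) = fracColour (z j))
    (h₂ : ∀ i j, i ≠ j → fracColour (z i + z j) = fracColour (z i)) :
    Tendsto (fun i ↦ |signedFrac (z i)|) cofinite (𝓝 0) := by
  have hpos (i : ι) : 0 < |signedFrac (z i)| := abs_pos.2 (h₀ i)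
  have log_injective : Injective fun i ↦ Int.log 2 |signedFrac (z i)| := by
    intro i j hlog
    by_contra hij
    have hparity : Even (Int.log 2 |signedFrac (z i + z j)|) =
        Even (Int.log 2 |signedFrac (z i)|) := congrArg Prod.snd (h₂ i j hij)
    rw [abs_signedFrac_add_of_fracColour_eq (h₁ j i) (h₂ i j hij),
      log_two_add_of_log_eq (hpos i) (hpos j) hlog, Int.even_add_one] at hparity
    exact not_iff_self (iff_of_eq hparity)
  have log_le (i : ι) : Int.log 2 |signedFrac (z i)| ≤ 0 := by
    rw [← Int.log_one_right (R := α) 2]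
    exact Int.log_mono_right (hpos i) ((abs_signedFrac_le_half _).trans (by norm_num))
  have log_tendsto := tendsto_cofinite_atTop_of_injective (α := ℤᵒᵈ) log_injective log_le
  refine tendsto_order.2 ⟨fun a ha ↦ .of_forall fun i ↦ ha.trans (hpos i), fun ε hε ↦ ?_⟩
  filter_upwards [log_tendsto.eventually_gt_atTop (Int.log 2 ε)] with i hi
  exact ((Int.lt_zpow_iff_log_lt one_lt_two (hpos i)).2 hi).trans_le
    (Int.zpow_log_le_self one_lt_two hε)

end Field

end SignedFrac

local notation "v₂" => padicValRat 2

section Valuation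

variable {p : ℕ}

lemma padicValRat_intCast_nonneg (n : ℤ) : 0 ≤ padicValRat p n := by
  rw [padicValRat.of_int]
  positivity

variable [Fact p.Prime]

lemma padicValRat_add_eq_of_lt {a b : ℚ} (ha : a ≠ 0) (h : padicValRat p a < padicValRat p b) :
    padicValRat p (a + b) = padicValRat p a := by
  rcases eq_or_ne b 0 with rfl | hb
  · rw [add_zero]
  · refine padicValRat.add_eq_of_lt (fun hab ↦ h.ne ?_) ha hb h
    rw [eq_neg_of_add_eq_zero_left hab, padicValRat.neg]

lemma padicValRat_zpow_self (k : ℤ) : padicValRat p ((p : ℚ) ^ k) = k := by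
  rw [padicValRat.zpow, padicValRat.self (Fact.out : p.Prime).one_lt, mul_one]

end Valuation

section OddPart

/-- The factor `u` of `q = 2 ^ v₂ q * u`, a `2`-adic unit if `q ≠ 0`. -/
def oddPart (q : ℚ) : ℚ := q / 2 ^ v₂ q

/-- The `2`-adic valuation of `u - 1`, where `u` is the odd part of `q`: if `u > 1` is an integer,
this is the position of its second lowest binary digit `1`. -/
def level (q : ℚ) : ℤ := v₂ (oddPart q - 1)

lemma oddPart_mul_zpow (q : ℚ) : oddPart q * 2 ^ v₂ q = q :=
  div_mul_cancel₀ q (by positivity)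

lemma oddPart_eq_iff {q u : ℚ} : oddPart q = u ↔ q = u * 2 ^ v₂ q :=
  div_eq_iff (by positivity)

lemma padicValRat_oddPart (q : ℚ) : v₂ (oddPart q) = 0 := by
  rcases eq_or_ne q 0 with rfl | hq
  · simp [oddPart]
  · have := padicValRat_zpow_self (p := 2) (v₂ q)
    rw [oddPart, padicValRat.div hq (by positivity)]
    simp_all

lemma oddPart_ne_zero {q : ℚ} (hq : q ≠ 0) : oddPart q ≠ 0 :=
  div_ne_zero hq (by positivity)

lemma oddPart_oddPart (q : ℚ) : oddPart (oddPart q) = oddPart q := by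
  rw [oddPart_eq_iff, padicValRat_oddPart, zpow_zero, mul_one]

lemma oddPart_mul (a b : ℚ) : oddPart (a * b) = oddPart a * oddPart b := by
  rcases eq_or_ne a 0 with rfl | ha
  · simp [oddPart]
  rcases eq_or_ne b 0 with rfl | hb
  · simp [oddPart]
  rw [oddPart, padicValRat.mul ha hb, zpow_add₀ two_ne_zero, mul_div_mul_comm, oddPart, oddPart]

lemma oddPart_mul_sub_one (a b : ℚ) :
    oddPart (a * b) - 1 = (oddPart a - 1) * oddPart b + (oddPart b - 1) := by
  rw [oddPart_mul]; ring

lemma padicValRat_mul_oddPart {a b : ℚ} (ha : a ≠ 0) (hb : b ≠ 0) :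
    v₂ (a * oddPart b) = v₂ a := by
  rw [padicValRat.mul ha (oddPart_ne_zero hb), padicValRat_oddPart, add_zero]

lemma level_mul_of_lt {a b : ℚ} (ha : oddPart a ≠ 1) (hb : b ≠ 0) (h : level a < level b) :
    level (a * b) = level a := by
  have hv : v₂ ((oddPart a - 1) * oddPart b) = level a :=
    padicValRat_mul_oddPart (sub_ne_zero.2 ha) hb
  rw [← hv, level, oddPart_mul_sub_one]
  exact padicValRat_add_eq_of_lt (mul_ne_zero (sub_ne_zero.2 ha) (oddPart_ne_zero hb))
    (hv.trans_lt h)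

lemma oddPart_add_of_lt {a b : ℚ} (ha : a ≠ 0) (h : v₂ a < v₂ b) :
    oddPart (a + b) = oddPart a + oddPart b * 2 ^ (v₂ b - v₂ a) := by
  rw [oddPart_eq_iff, padicValRat_add_eq_of_lt ha h, add_mul, mul_assoc,
    ← zpow_add₀ two_ne_zero, sub_add_cancel, oddPart_mul_zpow, oddPart_mul_zpow]

lemma min_le_level_add {a b : ℚ} (ha : a ≠ 0) (hb : b ≠ 0) (h : v₂ a < v₂ b)
    (hab : oddPart (a + b) ≠ 1) : min (level a) (v₂ b - v₂ a) ≤ level (a + b) := by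
  have hsplit : oddPart (a + b) - 1 = (oddPart a - 1) + oddPart b * 2 ^ (v₂ b - v₂ a) := by
    rw [oddPart_add_of_lt ha h]; ring
  have hv : v₂ (oddPart b * 2 ^ (v₂ b - v₂ a)) = v₂ b - v₂ a := by
    rw [padicValRat.mul (oddPart_ne_zero hb) (by positivity), padicValRat_oddPart, zero_add]
    exact padicValRat_zpow_self _
  have := padicValRat.min_le_padicValRat_add (p := 2) (hsplit ▸ sub_ne_zero.2 hab)
  rwa [hv, ← hsplit] at this

end OddPart

section Dyadic

lemma intCast_mem_dyadicRationals (n : ℤ) : (n : ℚ) ∈ DyadicRationals :=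
  ⟨n, 0, by simp⟩

lemma mul_mem_dyadicRationals {a b : ℚ} (ha : a ∈ DyadicRationals) (hb : b ∈ DyadicRationals) :
    a * b ∈ DyadicRationals := by
  obtain ⟨m, k, rfl⟩ := ha
  obtain ⟨n, l, rfl⟩ := hb
  exact ⟨m * n, k + l, by push_cast; rw [pow_add, div_mul_div_comm]⟩

lemma two_zpow_mem_dyadicRationals (k : ℤ) : (2 : ℚ) ^ k ∈ DyadicRationals := by
  obtain ⟨n, rfl | rfl⟩ := k.eq_nat_or_neg
  · exact ⟨2 ^ n, 0, by simp⟩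
  · exact ⟨1, n, by simp⟩

lemma exists_intCast_of_padicValRat_nonneg {q : ℚ} (hq : q ∈ DyadicRationals) (h : 0 ≤ v₂ q) :
    ∃ n : ℤ, q = n := by
  obtain ⟨a, k, rfl⟩ := hq
  rcases eq_or_ne a 0 with rfl | ha
  · exact ⟨0, by simp⟩
  have hk : k ≤ padicValInt 2 a := by
    have hpow := padicValRat_zpow_self (p := 2) k
    rw [padicValRat.div (by exact_mod_cast ha) (by positivity), padicValRat.of_int] at h
    simp_all
  obtain ⟨n, rfl⟩ := (padicValInt_dvd_iff (p := 2) k a).2 (.inr hk)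
  exact ⟨n, by push_cast; field_simp⟩

lemma padicValRat_intCast_eq_zero_iff {n : ℤ} (hn : n ≠ 0) : v₂ n = 0 ↔ Odd n := by
  rw [padicValRat.of_int, Nat.cast_eq_zero, padicValInt.eq_zero_iff, ← Int.not_even_iff_odd,
    even_iff_two_dvd]
  simp [hn]

lemma oddPart_mem_dyadicRationals {q : ℚ} (hq : q ∈ DyadicRationals) :
    oddPart q ∈ DyadicRationals := by
  rw [oddPart, div_eq_mul_inv, ← zpow_neg]
  exact mul_mem_dyadicRationals hq (two_zpow_mem_dyadicRationals _)

lemma exists_odd_intCast_eq_oddPart {q : ℚ} (hq : q ∈ DyadicRationals) (hq₀ : q ≠ 0) :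
    ∃ n : ℤ, Odd n ∧ oddPart q = n := by
  obtain ⟨n, hn⟩ := exists_intCast_of_padicValRat_nonneg (oddPart_mem_dyadicRationals hq)
    (padicValRat_oddPart q).ge
  refine ⟨n, (padicValRat_intCast_eq_zero_iff ?_).1 (hn ▸ padicValRat_oddPart q), hn⟩
  rintro rfl
  exact oddPart_ne_zero hq₀ (by simpa using hn)

end Dyadic

section BinaryColour

/-- The colour of `q` that controls sums `2`-adically: whether `q` vanishes, the parity of its
valuation, and whether its odd part is `1` modulo `4`. -/
def binaryColour (q : ℚ) : Prop × Prop × Prop :=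
  (q = 0, Even (v₂ q), (oddPart q).num % 4 = 1)

lemma binaryColour_eq_iff {a b : ℚ} : binaryColour a = binaryColour b ↔
    (a = 0 ↔ b = 0) ∧ (Even (v₂ a) ↔ Even (v₂ b)) ∧
      ((oddPart a).num % 4 = 1 ↔ (oddPart b).num % 4 = 1) := by
  simp only [binaryColour, Prod.mk.injEq, eq_iff_iff]

lemma padicValRat_add_of_num_mod_four_iff {a b : ℚ} (ha : a ∈ DyadicRationals) (ha₀ : a ≠ 0)
    (hb : b ∈ DyadicRationals) (hb₀ : b ≠ 0) (hv : v₂ a = v₂ b)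
    (hmod : (oddPart a).num % 4 = 1 ↔ (oddPart b).num % 4 = 1) : v₂ (a + b) = v₂ a + 1 := by
  obtain ⟨m, hm, ham⟩ := exists_odd_intCast_eq_oddPart ha ha₀
  obtain ⟨n, hn, hbn⟩ := exists_odd_intCast_eq_oddPart hb hb₀
  rw [ham, hbn, Rat.num_intCast, Rat.num_intCast] at hmod
  obtain ⟨c, hc, hmn⟩ : ∃ c : ℤ, Odd c ∧ m + n = 2 * c := by
    rw [Int.odd_iff] at hm hn
    exact ⟨(m + n) / 2, by rw [Int.odd_iff]; omega, by omega⟩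
  have hc₀ : c ≠ 0 := by rintro rfl; simp at hc
  have hsum : a + b = c * 2 ^ (v₂ a + 1) := by
    calc a + b = m * 2 ^ v₂ a + n * 2 ^ v₂ a := by
          rw [← ham, oddPart_mul_zpow, ← hbn, hv, oddPart_mul_zpow]
      _ = (m + n : ℤ) * 2 ^ v₂ a := by push_cast; ring
      _ = c * 2 ^ (v₂ a + 1) := by rw [hmn, zpow_add_one₀ two_ne_zero]; push_cast; ring
  rw [hsum, padicValRat.mul (by exact_mod_cast hc₀) (by positivity),
    (padicValRat_intCast_eq_zero_iff hc₀).2 hc, zero_add]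
  exact padicValRat_zpow_self _

lemma padicValRat_ne_of_binaryColour_eq {a b : ℚ} (ha : a ∈ DyadicRationals) (ha₀ : a ≠ 0)
    (hb : b ∈ DyadicRationals) (hb₀ : b ≠ 0) (hab : binaryColour a = binaryColour b)
    (hadd : binaryColour (a + b) = binaryColour a) : v₂ a ≠ v₂ b := by
  intro hv
  have hparity := (binaryColour_eq_iff.1 hadd).2.1
  rw [padicValRat_add_of_num_mod_four_iff ha ha₀ hb hb₀ hv (binaryColour_eq_iff.1 hab).2.2,
    Int.even_add_one] at hparity
  exact not_iff_self hparity

lemma num_oddPart_mul_mod_four {a b : ℚ} (ha : a ∈ DyadicRationals) (ha₀ : a ≠ 0)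
    (hb : b ∈ DyadicRationals) (hb₀ : b ≠ 0) : (oddPart (a * b)).num % 4 = 1 ↔
      ((oddPart a).num % 4 = 1 ↔ (oddPart b).num % 4 = 1) := by
  obtain ⟨m, hm, ham⟩ := exists_odd_intCast_eq_oddPart ha ha₀
  obtain ⟨n, hn, hbn⟩ := exists_odd_intCast_eq_oddPart hb hb₀
  rw [oddPart_mul, ham, hbn, ← Int.cast_mul]
  simp only [Rat.num_intCast]
  have hm4 : m % 4 = 1 ∨ m % 4 = 3 := by rw [Int.odd_iff] at hm; omega
  have hn4 : n % 4 = 1 ∨ n % 4 = 3 := by rw [Int.odd_iff] at hn; omega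
  rcases hm4 with h | h <;> rcases hn4 with h' | h' <;> simp [Int.mul_emod, h, h']

lemma binaryColour_mul_oddPart {a b : ℚ} (ha : a ∈ DyadicRationals) (ha₀ : a ≠ 0)
    (hb : b ∈ DyadicRationals) (hb₀ : b ≠ 0) (hb₁ : (oddPart b).num % 4 = 1) :
    binaryColour (a * oddPart b) = binaryColour a := by
  have hmod : (oddPart (a * oddPart b)).num % 4 = 1 ↔ (oddPart a).num % 4 = 1 := by
    rw [oddPart_mul, oddPart_oddPart, ← oddPart_mul, num_oddPart_mul_mod_four ha ha₀ hb hb₀]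
    exact iff_true_right hb₁
  rw [binaryColour_eq_iff, padicValRat_mul_oddPart ha₀ hb₀]
  exact ⟨by simp [oddPart_ne_zero hb₀], .rfl, hmod⟩

end BinaryColour

section RealSize

lemma two_zpow_padicValRat_le_abs {q : ℚ} (hq : q ∈ DyadicRationals) (hq₀ : q ≠ 0) :
    2 ^ v₂ q ≤ |q| := by
  obtain ⟨n, hn, hqn⟩ := exists_odd_intCast_eq_oddPart hq hq₀
  have hn₀ : n ≠ 0 := by rintro rfl; simp at hn
  calc (2 : ℚ) ^ v₂ q ≤ |(n : ℚ)| * 2 ^ v₂ q :=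
        le_mul_of_one_le_left (by positivity) (by exact_mod_cast Int.one_le_abs hn₀)
    _ = |oddPart q * 2 ^ v₂ q| := by rw [hqn, abs_mul, abs_of_pos (a := 2 ^ v₂ q) (by positivity)]
    _ = |q| := by rw [oddPart_mul_zpow]

lemma abs_oddPart_eq_one_of_signedFrac_logb_eq_zero {q : ℚ} (hq : q ≠ 0)
    (h : signedFrac (Real.logb 2 q) = 0) : |oddPart q| = 1 := by
  set k : ℤ := round (Real.logb 2 q)
  have hk : Real.logb 2 |(q : ℝ)| = k := by rw [Real.logb_abs, sub_eq_zero.1 h]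
  have habs : |q| = 2 ^ k := by
    have hreal : |(q : ℝ)| = 2 ^ k := by
      rw [← Real.rpow_intCast, ← hk, Real.rpow_logb two_pos (by norm_num) (by positivity)]
    have hcast : ((|q| : ℚ) : ℝ) = ((2 ^ k : ℚ) : ℝ) := by push_cast; exact hreal
    exact Rat.cast_injective hcast
  have hv : v₂ q = k := by
    have hvk := padicValRat_zpow_self (p := 2) k
    rw [Nat.cast_two, ← habs] at hvk
    rcases abs_choice q with hq' | hq' <;> simpa [hq'] using hvk
  rw [oddPart, abs_div, habs, hv, abs_of_pos (by positivity), div_self (by positivity)]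

lemma tendsto_logb_add_sub_logb {ι : Type*} {l : Filter ι} {y : ι → ℝ} (b c : ℝ)
    (hy : Tendsto (fun i ↦ |y i|) l atTop) :
    Tendsto (fun i ↦ Real.logb b (c + y i) - Real.logb b (y i)) l (𝓝 0) := by
  have hratio : Tendsto (fun i ↦ c / y i + 1) l (𝓝 1) := by
    have : Tendsto (fun i ↦ c / y i) l (𝓝 0) := by
      rw [tendsto_zero_iff_abs_tendsto_zero]
      simpa [comp_def, abs_div] using hy.const_div_atTop |c|
    simpa using this.add_const 1
  have hlog : Tendsto (fun i ↦ Real.logb b (c / y i + 1)) l (𝓝 0) := by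
    simpa [Real.logb] using (hratio.log one_ne_zero).div_const (Real.log b)
  refine hlog.congr' ?_
  filter_upwards [hy.eventually_gt_atTop |c|] with i hi
  have hyi : y i ≠ 0 := abs_pos.1 ((abs_nonneg c).trans_lt hi)
  have hci : c + y i ≠ 0 := fun h ↦ hi.ne (by rw [eq_neg_of_add_eq_zero_left h, abs_neg])
  rw [← Real.logb_div hci hyi, add_div, div_self hyi]

end RealSize

/-- `|signedFrac q| * 2 ^ level q`, which separates sums from products along sequences of
non-integers. -/
def fracWeight (q : ℚ) : ℚ := |signedFrac q| * 2 ^ level q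

/-- `|signedFrac (log₂ |q|)| * 2 ^ v₂ q`, which separates sums from products along sequences of
integers. -/
noncomputable def logWeight (q : ℚ) : ℝ := |signedFrac (Real.logb 2 q)| * 2 ^ v₂ q

/-- The colours of the partition; there are only finitely many, each `Prop` counting for two. -/
structure Colour where
  self : Prop × Prop × Prop
  oddPart : Prop × Prop × Prop
  round : Prop × Prop × Prop
  frac : SignType × Prop
  log : SignType × Prop
  fracWeight : Prop
  logWeight : Prop

instance : Finite Colour :=
  .of_injective
    (fun c ↦ (c.self, c.oddPart, c.round, c.frac, c.log, c.fracWeight, c.logWeight))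
    fun ⟨_, _, _, _, _, _, _⟩ ⟨_, _, _, _, _, _, _⟩ h ↦ by simpa using h

/-- The colouring of the rationals that defines the partition. -/
noncomputable def colour (q : ℚ) : Colour where
  self := binaryColour q
  oddPart := binaryColour (oddPart q - 1)
  round := binaryColour (round q)
  frac := fracColour q
  log := fracColour (Real.logb 2 q)
  fracWeight := fracWeight q < 1
  logWeight := logWeight q < 1

/-- A family of nonzero dyadic rationals whose terms, pairwise sums and pairwise products all have
the same colour. -/
structure IsMonochromatic {ι : Type*} (x : ι → ℚ) : Prop where
  mem : ∀ i, x i ∈ DyadicRationals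
  ne_zero : ∀ i, x i ≠ 0
  colour_eq : ∀ i j, colour (x i) = colour (x j)
  colour_add : ∀ i j, i ≠ j → colour (x i + x j) = colour (x i)
  colour_mul : ∀ i j, i ≠ j → colour (x i * x j) = colour (x i)

namespace IsMonochromatic

variable {ι : Type*} {x : ι → ℚ}

section

variable (h : IsMonochromatic x)
include h

lemma padicValRat_injective : Injective fun i ↦ v₂ (x i) := by
  intro i j hv
  by_contra hij
  exact padicValRat_ne_of_binaryColour_eq (h.mem i) (h.ne_zero i) (h.mem j) (h.ne_zero j)
    (congrArg Colour.self (h.colour_eq i j)) (congrArg Colour.self (h.colour_add i j hij)) hv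

lemma oddPart_eq_one_iff (i j : ι) : oddPart (x i) = 1 ↔ oddPart (x j) = 1 := by
  simpa [sub_eq_zero] using
    (binaryColour_eq_iff.1 (congrArg Colour.oddPart (h.colour_eq i j))).1

lemma oddPart_add_eq_one_iff {i j : ι} (hij : i ≠ j) :
    oddPart (x i + x j) = 1 ↔ oddPart (x i) = 1 := by
  simpa [sub_eq_zero] using
    (binaryColour_eq_iff.1 (congrArg Colour.oddPart (h.colour_add i j hij))).1

lemma logb_mul (i j : ι) :
    Real.logb 2 (x i * x j : ℚ) = Real.logb 2 (x i) + Real.logb 2 (x j) := by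
  rw [Rat.cast_mul, Real.logb_mul (mod_cast h.ne_zero i) (mod_cast h.ne_zero j)]

lemma fracColour_logb_add {i j : ι} (hij : i ≠ j) :
    fracColour (Real.logb 2 (x i) + Real.logb 2 (x j)) = fracColour (Real.logb 2 (x i)) := by
  rw [← h.logb_mul]
  exact congrArg Colour.log (h.colour_mul i j hij)

lemma oddPart_sub_one_mem (i : ι) : oddPart (x i) - 1 ∈ DyadicRationals := by
  obtain ⟨n, -, hn⟩ := exists_odd_intCast_eq_oddPart (h.mem i) (h.ne_zero i)
  rw [hn]
  exact_mod_cast intCast_mem_dyadicRationals (n - 1)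

section

variable [Nontrivial ι]

lemma num_oddPart_mod_four (i : ι) : (oddPart (x i)).num % 4 = 1 := by
  obtain ⟨j, hji⟩ := exists_ne i
  have heq := (binaryColour_eq_iff.1 (congrArg Colour.self (h.colour_eq i j))).2.2
  have hmul := (binaryColour_eq_iff.1 (congrArg Colour.self (h.colour_mul i j hji.symm))).2.2
  exact hmul.1 ((num_oddPart_mul_mod_four (h.mem i) (h.ne_zero i) (h.mem j) (h.ne_zero j)).2 heq)

lemma oddPart_ne_one (i : ι) : oddPart (x i) ≠ 1 := by
  intro hi
  have hone (j : ι) : oddPart (x j) = 1 := (h.oddPart_eq_one_iff i j).1 hi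
  have hle (j k : ι) : v₂ (x k) ≤ v₂ (x j) := by
    by_contra! hlt
    have hjk : j ≠ k := by rintro rfl; exact hlt.false
    have hsum := (h.oddPart_add_eq_one_iff hjk).2 (hone j)
    rw [oddPart_add_of_lt (h.ne_zero j) hlt, hone, hone, add_eq_left, one_mul] at hsum
    exact (zpow_ne_zero _ two_ne_zero) hsum
  obtain ⟨j, hji⟩ := exists_ne i
  exact hji (h.padicValRat_injective ((hle i j).antisymm (hle j i)))

lemma level_injective : Injective fun i ↦ level (x i) := by
  intro i j hlevel
  by_contra hij
  have hi₀ := sub_ne_zero.2 (h.oddPart_ne_one i)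
  have hj₀ := sub_ne_zero.2 (h.oddPart_ne_one j)
  have hscale : binaryColour ((oddPart (x i) - 1) * oddPart (x j)) =
      binaryColour (oddPart (x i) - 1) :=
    binaryColour_mul_oddPart (h.oddPart_sub_one_mem i) hi₀ (h.mem j) (h.ne_zero j)
      (h.num_oddPart_mod_four j)
  have hsum : binaryColour ((oddPart (x i) - 1) * oddPart (x j) + (oddPart (x j) - 1)) =
      binaryColour ((oddPart (x i) - 1) * oddPart (x j)) := by
    rw [hscale, ← oddPart_mul_sub_one]
    exact congrArg Colour.oddPart (h.colour_mul i j hij)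
  refine padicValRat_ne_of_binaryColour_eq ?_ ?_ (h.oddPart_sub_one_mem j) hj₀ ?_ hsum ?_
  · exact mul_mem_dyadicRationals (h.oddPart_sub_one_mem i) (oddPart_mem_dyadicRationals (h.mem j))
  · exact mul_ne_zero hi₀ (oddPart_ne_zero (h.ne_zero j))
  · exact hscale.trans (congrArg Colour.oddPart (h.colour_eq i j))
  · exact (padicValRat_mul_oddPart hi₀ (h.ne_zero j)).trans hlevel

lemma tendsto_level_atTop : Tendsto (fun j ↦ level (x j)) cofinite atTop := by
  refine tendsto_cofinite_atTop_of_injective (C := 0) h.level_injective fun j ↦ ?_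
  obtain ⟨n, -, hn⟩ := exists_odd_intCast_eq_oddPart (h.mem j) (h.ne_zero j)
  rw [level, hn]
  exact_mod_cast padicValRat_intCast_nonneg (n - 1)

lemma signedFrac_logb_ne_zero (i : ι) : signedFrac (Real.logb 2 (x i)) ≠ 0 := by
  intro hi
  have habs := abs_oddPart_eq_one_of_signedFrac_logb_eq_zero (h.ne_zero i) hi
  rcases eq_or_eq_neg_of_abs_eq habs with hone | hneg
  · exact h.oddPart_ne_one i hone
  · have := h.num_oddPart_mod_four i
    rw [hneg] at this
    norm_num at this

lemma tendsto_signedFrac_logb :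
    Tendsto (fun j ↦ |signedFrac (Real.logb 2 (x j))|) cofinite (𝓝 0) :=
  tendsto_signedFrac_of_fracColour_eq h.signedFrac_logb_ne_zero
    (fun i j ↦ congrArg Colour.log (h.colour_eq i j)) fun _ _ ↦ h.fracColour_logb_add

end

lemma logWeight_lt_one_iff {i j : ι} (hij : i ≠ j) :
    logWeight (x i + x j) < 1 ↔ logWeight (x i * x j) < 1 :=
  iff_of_eq (congrArg Colour.logWeight
    ((h.colour_add i j hij).trans (h.colour_mul i j hij).symm))

lemma fracWeight_lt_one_iff {i j : ι} (hij : i ≠ j) :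
    fracWeight (x i + x j) < 1 ↔ fracWeight (x i * x j) < 1 :=
  iff_of_eq (congrArg Colour.fracWeight
    ((h.colour_add i j hij).trans (h.colour_mul i j hij).symm))

lemma round_add {i j : ι} (hij : i ≠ j) : round (x i + x j) = round (x i) + round (x j) :=
  round_add_of_fracColour_eq (congrArg Colour.frac (h.colour_eq j i))
    (congrArg Colour.frac (h.colour_add i j hij))

lemma eventually_mul_round_eq_intCast (i : ι) :
    ∀ᶠ j in cofinite, ∃ n : ℤ, x i * round (x j) = n := by
  have round_eq_zero_iff (j k : ι) : round (x j) = 0 ↔ round (x k) = 0 := by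
    simpa using (binaryColour_eq_iff.1 (congrArg Colour.round (h.colour_eq j k))).1
  by_cases hi : round (x i) = 0
  · exact .of_forall fun j ↦ ⟨0, by simp [(round_eq_zero_iff i j).1 hi]⟩
  have hne (j : ι) : (round (x j) : ℚ) ≠ 0 := by
    exact_mod_cast (round_eq_zero_iff i j).not.1 hi
  have hinj : Injective fun j ↦ v₂ (round (x j)) := by
    intro j k hv
    by_contra hjk
    have hadd : binaryColour (round (x j) + round (x k) : ℚ) = binaryColour (round (x j)) := by
      rw [← Int.cast_add, ← h.round_add hjk]
      exact congrArg Colour.round (h.colour_add j k hjk)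
    exact padicValRat_ne_of_binaryColour_eq (intCast_mem_dyadicRationals _) (hne j)
      (intCast_mem_dyadicRationals _) (hne k)
      (congrArg Colour.round (h.colour_eq j k)) hadd hv
  have htendsto := tendsto_cofinite_atTop_of_injective hinj fun j ↦ padicValRat_intCast_nonneg _
  filter_upwards [htendsto.eventually_ge_atTop (-v₂ (x i))] with j hj
  refine exists_intCast_of_padicValRat_nonneg
    (mul_mem_dyadicRationals (h.mem i) (intCast_mem_dyadicRationals _)) ?_
  rw [padicValRat.mul (h.ne_zero i) (hne j)]
  omega

lemma signedFrac_eq_zero_iff (i j : ι) : signedFrac (x i) = 0 ↔ signedFrac (x j) = 0 :=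
  signedFrac_eq_zero_iff_of_fracColour_eq (congrArg Colour.frac (h.colour_eq i j))

end

section Integers

variable (h : IsMonochromatic x) (hint : ∀ j, signedFrac (x j) = 0)
include h hint

lemma tendsto_padicValRat_atTop : Tendsto (fun j ↦ v₂ (x j)) cofinite atTop := by
  refine tendsto_cofinite_atTop_of_injective (C := 0) h.padicValRat_injective fun j ↦ ?_
  rw [sub_eq_zero.1 (hint j)]
  exact padicValRat_intCast_nonneg _

lemma tendsto_abs_atTop : Tendsto (fun j ↦ |(x j : ℝ)|) cofinite atTop := by
  refine tendsto_atTop_mono (fun j ↦ ?_)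
    ((tendsto_zpow_atTop_of_one_lt one_lt_two).comp (h.tendsto_padicValRat_atTop hint))
  have hle := (Rat.cast_le (K := ℝ)).2 (two_zpow_padicValRat_le_abs (h.mem j) (h.ne_zero j))
  push_cast at hle
  exact hle

variable [Nontrivial ι]

lemma tendsto_logWeight_add (i : ι) :
    Tendsto (fun j ↦ logWeight (x i + x j)) cofinite (𝓝 0) := by
  have hlog := tendsto_logb_add_sub_logb 2 (x i : ℝ) (h.tendsto_abs_atTop hint)
  have hbound := (h.tendsto_signedFrac_logb.add hlog.abs).mul_const ((2 : ℝ) ^ v₂ (x i))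
  rw [abs_zero, add_zero, zero_mul] at hbound
  refine squeeze_zero' (.of_forall fun j ↦ by unfold logWeight; positivity) ?_ hbound
  filter_upwards [(h.tendsto_padicValRat_atTop hint).eventually_gt_atTop (v₂ (x i))] with j hj
  rw [logWeight, padicValRat_add_eq_of_lt (h.ne_zero i) hj, Rat.cast_add]
  gcongr
  simpa using abs_signedFrac_add_le (Real.logb 2 (x j))
    (Real.logb 2 (x i + x j) - Real.logb 2 (x j))

lemma tendsto_logWeight_mul (i : ι) :
    Tendsto (fun j ↦ logWeight (x i * x j)) cofinite atTop := by
  have hexp := tendsto_atTop_add_const_left _ (v₂ (x i)) (h.tendsto_padicValRat_atTop hint)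
  have hbound := ((tendsto_zpow_atTop_of_one_lt (one_lt_two (α := ℝ))).comp hexp).const_mul_atTop
    (abs_pos.2 (h.signedFrac_logb_ne_zero i))
  refine tendsto_atTop_mono' _ ?_ hbound
  filter_upwards [eventually_cofinite_ne i] with j hji
  rw [logWeight, padicValRat.mul (h.ne_zero i) (h.ne_zero j), h.logb_mul,
    abs_signedFrac_add_of_fracColour_eq (congrArg Colour.log (h.colour_eq j i))
      (h.fracColour_logb_add hji.symm), comp_apply]
  gcongr
  exact le_add_of_nonneg_right (abs_nonneg _)

end Integers

section NonIntegers

variable (h : IsMonochromatic x) (hfrac : ∀ j, signedFrac (x j) ≠ 0)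
include h hfrac

lemma tendsto_padicValRat_atBot : Tendsto (fun j ↦ v₂ (x j)) cofinite atBot := by
  refine tendsto_cofinite_atTop_of_injective (α := ℤᵒᵈ) (C := (0 : ℤ))
    h.padicValRat_injective fun j ↦ show v₂ (x j) ≤ 0 from ?_
  by_contra! hpos
  obtain ⟨n, hn⟩ := exists_intCast_of_padicValRat_nonneg (h.mem j) hpos.le
  exact hfrac j (hn ▸ signedFrac_intCast n)

lemma tendsto_signedFrac : Tendsto (fun j ↦ |signedFrac (x j)|) cofinite (𝓝 0) :=
  tendsto_signedFrac_of_fracColour_eq hfrac (fun i j ↦ congrArg Colour.frac (h.colour_eq i j))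
    fun i j hij ↦ congrArg Colour.frac (h.colour_add i j hij)

variable [Nontrivial ι]

lemma tendsto_fracWeight_mul (i : ι) :
    Tendsto (fun j ↦ fracWeight (x i * x j)) cofinite (𝓝 0) := by
  have hbound := ((h.tendsto_signedFrac hfrac).const_mul |x i|).mul_const ((2 : ℚ) ^ level (x i))
  rw [mul_zero, zero_mul] at hbound
  refine tendsto_of_tendsto_of_tendsto_of_le_of_le' tendsto_const_nhds hbound
    (.of_forall fun j ↦ by unfold fracWeight; positivity) ?_
  filter_upwards [h.eventually_mul_round_eq_intCast i,
    h.tendsto_level_atTop.eventually_gt_atTop (level (x i))] with j ⟨n, hn⟩ hj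
  rw [fracWeight, level_mul_of_lt (h.oddPart_ne_one i) (h.ne_zero j) hj]
  gcongr
  calc |signedFrac (x i * x j)| ≤ |x i * x j - n| := round_le _ n
    _ = |x i| * |signedFrac (x j)| := by rw [← hn, ← mul_sub, abs_mul, signedFrac]

lemma tendsto_level_add_atTop (i : ι) :
    Tendsto (fun j ↦ level (x i + x j)) cofinite atTop := by
  refine tendsto_atTop.2 fun K ↦ ?_
  have hbot := h.tendsto_padicValRat_atBot hfrac
  filter_upwards [eventually_cofinite_ne i, h.tendsto_level_atTop.eventually_ge_atTop K,
    hbot.eventually_lt_atBot (v₂ (x i)), hbot.eventually_le_atBot (v₂ (x i) - K)]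
    with j hji hlevel hlt hgap
  have hne := (h.oddPart_add_eq_one_iff hji).not.2 (h.oddPart_ne_one j)
  rw [add_comm (x i)]
  exact (le_min hlevel (by omega)).trans (min_le_level_add (h.ne_zero j) (h.ne_zero i) hlt hne)

lemma tendsto_fracWeight_add (i : ι) :
    Tendsto (fun j ↦ fracWeight (x i + x j)) cofinite atTop := by
  have hbound := ((tendsto_zpow_atTop_of_one_lt (one_lt_two (α := ℚ))).comp
    (h.tendsto_level_add_atTop hfrac i)).const_mul_atTop (abs_pos.2 (hfrac i))
  refine tendsto_atTop_mono' _ ?_ hbound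
  filter_upwards [eventually_cofinite_ne i] with j hji
  rw [fracWeight, abs_signedFrac_add_of_fracColour_eq (congrArg Colour.frac (h.colour_eq j i))
    (congrArg Colour.frac (h.colour_add i j hji.symm)), comp_apply]
  gcongr
  exact le_add_of_nonneg_right (abs_nonneg _)

end NonIntegers

end IsMonochromatic

theorem not_isMonochromatic {ι : Type*} [Infinite ι] (x : ι → ℚ) : ¬ IsMonochromatic x := by
  intro h
  obtain ⟨i⟩ : Nonempty ι := inferInstance
  by_cases hi : signedFrac (x i) = 0
  · have hint (j : ι) : signedFrac (x j) = 0 := (h.signedFrac_eq_zero_iff i j).1 hi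
    refine not_eventually_lt_iff_lt one_pos (h.tendsto_logWeight_add hint i)
      (h.tendsto_logWeight_mul hint i) ?_
    filter_upwards [eventually_cofinite_ne i] with j hji using h.logWeight_lt_one_iff hji.symm
  · have hfrac (j : ι) : signedFrac (x j) ≠ 0 := (h.signedFrac_eq_zero_iff i j).not.1 hi
    refine not_eventually_lt_iff_lt one_pos (h.tendsto_fracWeight_mul hfrac i)
      (h.tendsto_fracWeight_add hfrac i) ?_
    filter_upwards [eventually_cofinite_ne i] with j hji
    exact (h.fracWeight_lt_one_iff hji.symm).symm

theorem dyadic_no_combined_FS_FP_general :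
    ∃ (r : ℕ) (A : Fin r → Set ℚ),
      (∀ i, A i ⊆ DyadicRationals \ {0}) ∧
      (∀ q ∈ DyadicRationals \ {0}, ∃ i, q ∈ A i) ∧
      Pairwise (Disjoint on A) ∧
      ¬ ∃ (i : Fin r) (x : ℕ → ℚ), (∀ n, x n ∈ A i) ∧
          ∀ m n, m ≠ n → x m + x n ∈ A i ∧ x m * x n ∈ A i := by
  obtain ⟨r, ⟨e⟩⟩ := Finite.exists_equiv_fin Colour
  refine ⟨r, fun i ↦ {q ∈ DyadicRationals \ {0} | e (colour q) = i}, fun i q hq ↦ hq.1,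
    fun q hq ↦ ⟨_, hq, rfl⟩, fun i j hij ↦ ?_, ?_⟩
  · exact Set.disjoint_left.2 fun q hi hj ↦ hij (hi.2.symm.trans hj.2)
  rintro ⟨i, x, hx, hpairs⟩
  refine not_isMonochromatic x ⟨fun n ↦ (hx n).1.1, fun n ↦ (hx n).1.2, fun m n ↦ ?_,
    fun m n hmn ↦ ?_, fun m n hmn ↦ ?_⟩
  · exact e.injective ((hx m).2.trans (hx n).2.symm)
  · exact e.injective ((hpairs m n hmn).1.2.trans (hx m).2.symm)
  · exact e.injective ((hpairs m n hmn).2.2.trans (hx m).2.symm)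

/-- There is a finite partition `𝔻 \ {0} = A₁ ∪ … ∪ A_r` of the nonzero
dyadic rationals such that no cell `A_i` contains `FS(⟨xₙ⟩) ∪ FP(⟨xₙ⟩)` for any
sequence `⟨xₙ⟩` in `𝔻 \ {0}`. -/
theorem dyadic_no_combined_FS_FP :
    ∃ (r : ℕ) (A : Fin r → Set ℚ),
      (∀ i, A i ⊆ DyadicRationals \ {0}) ∧
      (∀ q ∈ DyadicRationals \ {0}, ∃ i, q ∈ A i) ∧
      ¬ ∃ (i : Fin r) (x : ℕ → ℚ), (∀ n, x n ∈ DyadicRationals \ {0}) ∧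
          FS x ∪ FP x ⊆ A i := by
  obtain ⟨r, A, hA, hcover, -, hbad⟩ := dyadic_no_combined_FS_FP_general
  refine ⟨r, A, hA, hcover, fun ⟨i, x, _, hx⟩ ↦ hbad ⟨i, x, fun n ↦ hx (.inl ⟨{n}, by simp⟩), ?_⟩⟩
  exact fun m n hmn ↦ ⟨hx (.inl ⟨{m, n}, by simp [hmn]⟩), hx (.inr ⟨{m, n}, by simp [hmn]⟩)⟩
end

section
/- Let S be a dense subsemigroup of ((0, ∞), +) and let A be a u × v matrix with entries from ℚ, where u, v ∈ ℕ, which is image partition regular near 0 over S. Then I(A) = {p ∈ 0⁺(S) : for every P ∈ p there exists x⃗ ∈ S^v such that all entries of Ax⃗ are in P} is a subsemigroup of (0⁺(S), +): for all p, q ∈ I(A), p + q ∈ I(A). -/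
/-- The semigroup operation `+` on the ultrafilters `βS_d` on `S ⊆ ℝ`:
`B ∈ p + q` iff `{x ∈ S : {y ∈ S : x + y ∈ B} ∈ q} ∈ p`. -/
def uaddS (S : Set ℝ) (hS : ∀ a ∈ S, ∀ b ∈ S, a + b ∈ S)
    (p q : Ultrafilter S) : Ultrafilter S :=
  p.bind fun x => q.map fun y => (⟨x.1 + y.1, hS x.1 x.2 y.1 y.2⟩ : S)

/-- `0⁺(S)`: the ultrafilters `p` on `S` with `(0, r) ∩ S ∈ p` for every `r > 0`. -/
def zeroPlus (S : Set ℝ) : Set (Ultrafilter S) :=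
  {p | ∀ r : ℝ, 0 < r → {s : S | (s : ℝ) < r} ∈ p}

/-- A `u × v` matrix `A` over ℚ is image partition regular near 0 over `S`. -/
def IPRNearZero {u v : ℕ} (S : Set ℝ) (A : Matrix (Fin u) (Fin v) ℚ) : Prop :=
  ∀ (r : ℕ) (E : Fin r → Set ℝ), (∀ i, E i ⊆ S) → (∀ s ∈ S, ∃ i, s ∈ E i) →
    ∀ ε > (0 : ℝ),
      ∃ (i : Fin r) (x : Fin v → ℝ), (∀ j, x j ∈ S) ∧
        ∀ a : Fin u, (A.map ((↑) : ℚ → ℝ)).mulVec x a ∈ E i ∩ Set.Ioo 0 ε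

/-- `I(A) = {p ∈ 0⁺(S) : for every P ∈ p there is x⃗ ∈ S^v such that all entries of
`Ax⃗` are in P}`. -/
def IA {u v : ℕ} (S : Set ℝ) (A : Matrix (Fin u) (Fin v) ℚ) : Set (Ultrafilter S) :=
  {p | p ∈ zeroPlus S ∧ ∀ P ∈ p, ∃ x : Fin v → S,
    ∀ a : Fin u, ∃ s ∈ P, ((s : ℝ) = (A.map ((↑) : ℚ → ℝ)).mulVec (fun j => (x j : ℝ)) a)}

/-!
The set `I(A)` only sees `A` through the additive semigroup `R` of vectors `w ∈ S ^ u` of the form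
`w = A x` with `x ∈ S ^ v`: an ultrafilter `p ∈ 0⁺(S)` lies in `I(A)` iff `R` meets `P ^ u` for
every `P ∈ p`. Let `p` and `q` have this property and let `B ∈ p + q`. Then some `w ∈ R` has all its
entries in `{s | {t | s + t ∈ B} ∈ q}`. Being finite in number, the sets `{t | w a + t ∈ B}` have
an intersection in `q`, so some `z ∈ R` has all its entries in that intersection, and
`w + z ∈ R ∩ B ^ u`.
-/

open Filter Matrix

attribute [local instance] Ultrafilter.add

/-- The ultrafilters `p` on `M` every member of which contains all the entries of some vector
`w ∈ R`, where `R ⊆ M ^ ι`; for `R` the set of vectors `A x` this is the condition that cuts out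
`I(A)` inside `0⁺(S)`. -/
def realizingUltrafilters {M ι : Type*} (R : Set (ι → M)) : Set (Ultrafilter M) :=
  {p | ∀ P ∈ p, ∃ w ∈ R, ∀ i, w i ∈ P}

theorem add_mem_realizingUltrafilters {M ι : Type*} [Add M] [Finite ι]
    (R : AddSubsemigroup (ι → M)) {p q : Ultrafilter M}
    (hp : p ∈ realizingUltrafilters (R : Set (ι → M)))
    (hq : q ∈ realizingUltrafilters (R : Set (ι → M))) :
    p + q ∈ realizingUltrafilters (R : Set (ι → M)) := by
  intro B hB
  have hB' : ∀ᶠ s in p, ∀ᶠ t in q, s + t ∈ B := (Ultrafilter.eventually_add p q (· ∈ B)).1 hB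
  obtain ⟨w, hwR, hw⟩ := hp _ hB'
  obtain ⟨z, hzR, hz⟩ := hq _ (eventually_all.2 hw)
  exact ⟨w + z, R.add_mem hwR hzR, fun i => hz i i⟩

/-- The image `{A *ᵥ x | x ∈ S ^ n} ∩ S ^ m` of the matrix `A` over `S`, as a subsemigroup of
`S ^ m`; vectors over `S` are functions into the subtype, so the equation is stated in `K`. -/
def imageSubsemigroup {K m n : Type*} [NonUnitalNonAssocSemiring K] [Fintype n]
    (S : AddSubsemigroup K) (A : Matrix m n K) : AddSubsemigroup (m → S) where
  carrier := {w | ∃ x : n → S, ∀ a, (w a : K) = (A *ᵥ fun j => (x j : K)) a}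
  add_mem' := by
    rintro w z ⟨x, hx⟩ ⟨y, hy⟩
    refine ⟨x + y, fun a => ?_⟩
    calc (w a + z a : K) = (A *ᵥ fun j => (x j : K)) a + (A *ᵥ fun j => (y j : K)) a := by
          rw [hx, hy]
      _ = (A *ᵥ fun j => ((x + y) j : K)) a := (congrFun (mulVec_add A _ _) a).symm

section Real

variable {S : AddSubsemigroup ℝ}

theorem uaddS_eq_add (p q : Ultrafilter S) :
    uaddS S (fun _ ha _ hb => S.add_mem ha hb) p q = p + q :=
  rfl

theorem add_mem_zeroPlus {p q : Ultrafilter S} (hp : p ∈ zeroPlus S) (hq : q ∈ zeroPlus S) :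
    p + q ∈ zeroPlus S := by
  intro r hr
  refine (Ultrafilter.eventually_add p q fun s => (s : ℝ) < r).2 ?_
  filter_upwards [hp (r / 2) (half_pos hr)] with s hs
  filter_upwards [hq (r / 2) (half_pos hr)] with t ht
  exact (add_lt_add hs ht).trans_eq (add_halves r)

theorem mem_IA_iff {u v : ℕ} {A : Matrix (Fin u) (Fin v) ℚ} {p : Ultrafilter S} :
    p ∈ IA S A ↔ p ∈ zeroPlus S ∧ p ∈ realizingUltrafilters
      (imageSubsemigroup S (A.map ((↑) : ℚ → ℝ)) : Set (Fin u → S)) := by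
  refine and_congr_right fun _ => forall₂_congr fun P _ => ⟨?_, ?_⟩
  · rintro ⟨x, hx⟩
    choose w hwP hw using hx
    exact ⟨w, ⟨x, hw⟩, hwP⟩
  · rintro ⟨w, ⟨x, hw⟩, hwP⟩
    exact ⟨x, fun a => ⟨w a, hwP a, hw a⟩⟩

theorem add_mem_IA {u v : ℕ} {A : Matrix (Fin u) (Fin v) ℚ} {p q : Ultrafilter S}
    (hp : p ∈ IA S A) (hq : q ∈ IA S A) : p + q ∈ IA S A := by
  rw [mem_IA_iff] at hp hq ⊢
  exact ⟨add_mem_zeroPlus hp.1 hq.1, add_mem_realizingUltrafilters _ hp.2 hq.2⟩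

end Real

theorem IA_subsemigroup_general (S : Set ℝ) (hSadd : ∀ a ∈ S, ∀ b ∈ S, a + b ∈ S)
    (u v : ℕ) (A : Matrix (Fin u) (Fin v) ℚ) :
    ∀ p ∈ IA S A, ∀ q ∈ IA S A, uaddS S hSadd p q ∈ IA S A := by
  intro p hp q hq
  let T : AddSubsemigroup ℝ := ⟨S, fun {a b} ha hb => hSadd a ha b hb⟩
  exact uaddS_eq_add (S := T) p q ▸ add_mem_IA (S := T) hp hq

/-- For a dense subsemigroup `S` of `((0, ∞), +)` and a finite `u × v`
matrix `A` over ℚ that is image partition regular near 0 over `S`, the set `I(A)` is a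
subsemigroup of `(0⁺(S), +)`. -/
theorem IA_subsemigroup (S : Set ℝ)
    (hSpos : S ⊆ Set.Ioi 0)
    (hSadd : ∀ a ∈ S, ∀ b ∈ S, a + b ∈ S)
    (hSdense : ∀ x ∈ Set.Ioi (0 : ℝ), ∀ ε > 0, ∃ s ∈ S, |x - s| < ε)
    (u v : ℕ) (A : Matrix (Fin u) (Fin v) ℚ) (hA : IPRNearZero S A) :
    ∀ p ∈ IA S A, ∀ q ∈ IA S A, uaddS S hSadd p q ∈ IA S A :=
  IA_subsemigroup_general S hSadd u v A
end
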